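/- For all w1, w2 ∈ H^1 one has S̃(w1 * w2) = S̃(w1) *̄ S̃(w2) and S̃(w1 ш w2) = S̃(w1) ш̄ S̃(w2). -/

import Mathlib

open scoped BigOperators

/-- The two-letter alphabet {x, y}. -/
inductive Letter : Type
  | x : Letter
  | y : Letter
deriving DecidableEq

/-- `H = ℚ⟨x,y⟩`, the noncommutative polynomial ring over ℚ in two
indeterminates, realized as the monoid algebra of the free monoid on `{x,y}`. -/
abbrev H : Type := MonoidAlgebra ℚ (FreeMonoid Letter)

namespace H

/-- The monomial (word) of `H` corresponding to an element of the free monoid. -/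
noncomputable def word (w : FreeMonoid Letter) : H := MonoidAlgebra.single w 1

/-- The generator `x`. -/
noncomputable def X : H := word (FreeMonoid.of Letter.x)

/-- The generator `y`. -/
noncomputable def Y : H := word (FreeMonoid.of Letter.y)

/-- The word `z_k = x^{k-1} y` (for `k ≥ 1`). -/
def zW (k : ℕ) : FreeMonoid Letter :=
  FreeMonoid.ofList (List.replicate (k - 1) Letter.x ++ [Letter.y])

/-- `z_k = x^{k-1} y` as an element of `H`. -/
noncomputable def z (k : ℕ) : H := word (zW k)

/-- A list `[k₁,…,kₙ]` gives the word `z_{k₁} z_{k₂} ⋯ z_{kₙ}`. -/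
def zListW (ks : List ℕ) : FreeMonoid Letter :=
  FreeMonoid.ofList (ks.flatMap fun k => List.replicate (k - 1) Letter.x ++ [Letter.y])

/-- `H¹ = ℚ + Hy` as a ℚ-submodule of `H`. -/
noncomputable def H1 : Submodule ℚ H :=
  LinearMap.range (LinearMap.mulRight ℚ Y) ⊔ Submodule.span ℚ {1}

/-- `H⁰ = ℚ + xHy` as a ℚ-submodule of `H`. -/
noncomputable def H0 : Submodule ℚ H :=
  LinearMap.range ((LinearMap.mulRight ℚ Y).comp (LinearMap.mulLeft ℚ X)) ⊔
    Submodule.span ℚ {1}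

/-- Parse a word of `H¹` into the exponent list of its `z`-decomposition:
`z_{k₁}⋯z_{kₙ} ↦ [k₁,…,kₙ]` (auxiliary accumulator version). -/
def toZAux : List Letter → ℕ → List ℕ
  | [], _ => []
  | Letter.x :: r, n => toZAux r (n + 1)
  | Letter.y :: r, n => (n + 1) :: toZAux r 0

/-- The `z`-decomposition of a word of `H¹`. -/
def toZ (w : FreeMonoid Letter) : List ℕ := toZAux (FreeMonoid.toList w) 0

/-- The harmonic product on words of `H¹` (via `z`-decompositions):
`1 * w = w * 1 = w` and
`z_k w₁ * z_l w₂ = z_k (w₁ * z_l w₂) + z_l (z_k w₁ * w₂) + z_{k+l} (w₁ * w₂)`. -/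
noncomputable def harmW : List ℕ → List ℕ → H
  | [], w => word (zListW w)
  | k :: w1, [] => word (zListW (k :: w1))
  | k :: w1, l :: w2 =>
      z k * harmW w1 (l :: w2) + z l * harmW (k :: w1) w2 + z (k + l) * harmW w1 w2
termination_by w1 w2 => w1.length + w2.length
decreasing_by all_goals simp [Nat.lt_succ_iff] <;> omega

/-- The n-harmonic product on words of `H¹`:
`1 *̄ w = w *̄ 1 = w` and
`z_k w₁ *̄ z_l w₂ = z_k (w₁ *̄ z_l w₂) + z_l (z_k w₁ *̄ w₂) − z_{k+l} (w₁ *̄ w₂)`. -/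
noncomputable def nharmW : List ℕ → List ℕ → H
  | [], w => word (zListW w)
  | k :: w1, [] => word (zListW (k :: w1))
  | k :: w1, l :: w2 =>
      z k * nharmW w1 (l :: w2) + z l * nharmW (k :: w1) w2 - z (k + l) * nharmW w1 w2
termination_by w1 w2 => w1.length + w2.length
decreasing_by all_goals simp [Nat.lt_succ_iff] <;> omega

/-- The harmonic product `*` on `H¹`, extended ℚ-bilinearly. -/
noncomputable def harm (a b : H) : H :=
  Finsupp.sum a.coeff fun w1 c1 =>
    Finsupp.sum b.coeff fun w2 c2 => (c1 * c2) • harmW (toZ w1) (toZ w2)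

/-- The n-harmonic product `*̄` on `H¹`, extended ℚ-bilinearly. -/
noncomputable def nharm (a b : H) : H :=
  Finsupp.sum a.coeff fun w1 c1 =>
    Finsupp.sum b.coeff fun w2 c2 => (c1 * c2) • nharmW (toZ w1) (toZ w2)

/-- The letter exchange `τ(x) = y`, `τ(y) = x`. -/
def τ : Letter → Letter
  | Letter.x => Letter.y
  | Letter.y => Letter.x

/-- `δ(w) = 1` if `w` is the empty word, `0` otherwise. -/
def δ : List Letter → ℚ
  | [] => 1
  | _ :: _ => 0

/-- The shuffle product on words:
`1 ш w = w ш 1 = w` and `u₁w₁ ш u₂w₂ = u₁(w₁ ш u₂w₂) + u₂(u₁w₁ ш w₂)`. -/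
noncomputable def shW : List Letter → List Letter → H
  | [], w => word (FreeMonoid.ofList w)
  | u :: w, [] => word (FreeMonoid.ofList (u :: w))
  | u1 :: w1, u2 :: w2 =>
      word (FreeMonoid.of u1) * shW w1 (u2 :: w2) +
        word (FreeMonoid.of u2) * shW (u1 :: w1) w2
termination_by w1 w2 => w1.length + w2.length
decreasing_by all_goals simp [Nat.lt_succ_iff]

/-- The n-shuffle product on words: `1 ш̄ w = w ш̄ 1 = w` and
`u₁w₁ ш̄ u₂w₂ = u₁(w₁ ш̄ u₂w₂) + u₂(u₁w₁ ш̄ w₂) − δ(w₁)τ(u₁)u₂w₂ − δ(w₂)τ(u₂)u₁w₁`. -/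
noncomputable def nshW : List Letter → List Letter → H
  | [], w => word (FreeMonoid.ofList w)
  | u :: w, [] => word (FreeMonoid.ofList (u :: w))
  | u1 :: w1, u2 :: w2 =>
      word (FreeMonoid.of u1) * nshW w1 (u2 :: w2) +
        word (FreeMonoid.of u2) * nshW (u1 :: w1) w2 -
        δ w1 • word (FreeMonoid.ofList (τ u1 :: u2 :: w2)) -
        δ w2 • word (FreeMonoid.ofList (τ u2 :: u1 :: w1))
termination_by w1 w2 => w1.length + w2.length
decreasing_by all_goals simp [Nat.lt_succ_iff]

/-- The shuffle product `ш` on `H`, extended ℚ-bilinearly. -/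
noncomputable def sh (a b : H) : H :=
  Finsupp.sum a.coeff fun w1 c1 =>
    Finsupp.sum b.coeff fun w2 c2 =>
      (c1 * c2) • shW (FreeMonoid.toList w1) (FreeMonoid.toList w2)

/-- The n-shuffle product `ш̄` on `H`, extended ℚ-bilinearly. -/
noncomputable def nsh (a b : H) : H :=
  Finsupp.sum a.coeff fun w1 c1 =>
    Finsupp.sum b.coeff fun w2 c2 =>
      (c1 * c2) • nshW (FreeMonoid.toList w1) (FreeMonoid.toList w2)

/-- `S₁`: the ℚ-algebra endomorphism of `H` with `S₁(x) = x`, `S₁(y) = x + y`. -/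
noncomputable def S1 : H →ₐ[ℚ] H :=
  MonoidAlgebra.lift ℚ H (FreeMonoid Letter)
    (FreeMonoid.lift fun u => match u with
      | Letter.x => X
      | Letter.y => X + Y)

/-- `S₂`: the ℚ-algebra endomorphism of `H` with `S₂(x) = x`, `S₂(y) = y − x`. -/
noncomputable def S2 : H →ₐ[ℚ] H :=
  MonoidAlgebra.lift ℚ H (FreeMonoid Letter)
    (FreeMonoid.lift fun u => match u with
      | Letter.x => X
      | Letter.y => Y - X)

/-- `S` on a word: `S(1) = 1` and `S(Fy) = S₁(F)y`. -/
noncomputable def SW (w : FreeMonoid Letter) : H :=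
  match (FreeMonoid.toList w).getLast? with
  | some Letter.y =>
      S1 (word (FreeMonoid.ofList (FreeMonoid.toList w).dropLast)) * Y
  | _ => word w

/-- The ℚ-linear map `S : H¹ → H¹` with `S(1) = 1`, `S(Fy) = S₁(F)y`. -/
noncomputable def S (a : H) : H := Finsupp.sum a.coeff fun w c => c • SW w

/-- `S̃` on a word: `S̃(1) = 1` and `S̃(Fy) = S₂(F)y`. -/
noncomputable def StW (w : FreeMonoid Letter) : H :=
  match (FreeMonoid.toList w).getLast? with
  | some Letter.y =>
      S2 (word (FreeMonoid.ofList (FreeMonoid.toList w).dropLast)) * Y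
  | _ => word w

/-- The ℚ-linear map `S̃ : H¹ → H¹` with `S̃(1) = 1`, `S̃(Fy) = S₂(F)y`. -/
noncomputable def St (a : H) : H := Finsupp.sum a.coeff fun w c => c • StW w

/-- The multiple zeta value `ζ(k₁,…,kₙ)`: the sum over strictly decreasing
tuples `m₁ > m₂ > ⋯ > mₙ > 0` of `1/(m₁^{k₁}⋯mₙ^{kₙ})`. -/
noncomputable def mzeta (ks : List ℕ) : ℝ :=
  ∑' m : {f : Fin ks.length → ℕ // (∀ i, 0 < f i) ∧
      ∀ i j : Fin ks.length, i < j → f j < f i},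
    ∏ i : Fin ks.length, ((m.1 i : ℝ) ^ ks.get i)⁻¹

/-- The non-strict multiple zeta value `ζ̄(k₁,…,kₙ)`: the sum over weakly
decreasing tuples `m₁ ≥ m₂ ≥ ⋯ ≥ mₙ > 0` of `1/(m₁^{k₁}⋯mₙ^{kₙ})`. -/
noncomputable def nmzeta (ks : List ℕ) : ℝ :=
  ∑' m : {f : Fin ks.length → ℕ // (∀ i, 0 < f i) ∧
      ∀ i j : Fin ks.length, i ≤ j → f j ≤ f i},
    ∏ i : Fin ks.length, ((m.1 i : ℝ) ^ ks.get i)⁻¹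

/-- The evaluation map `Z : H⁰ → ℝ`, `Z(1) = 1`,
`Z(z_{k₁}⋯z_{kₙ}) = ζ(k₁,…,kₙ)` (extended ℚ-linearly to `H`). -/
noncomputable def Z (a : H) : ℝ := Finsupp.sum a.coeff fun w c => (c : ℝ) * mzeta (toZ w)

/-- The n-evaluation map `Z̄ : H⁰ → ℝ`, `Z̄(1) = 1`,
`Z̄(z_{k₁}⋯z_{kₙ}) = ζ̄(k₁,…,kₙ)` (extended ℚ-linearly to `H`). -/
noncomputable def Zbar (a : H) : ℝ := Finsupp.sum a.coeff fun w c => (c : ℝ) * nmzeta (toZ w)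

/-- `i`-fold n-harmonic power: `a^{*̄ 0} = 1`, `a^{*̄ (i+1)} = a *̄ a^{*̄ i}`. -/
noncomputable def nharmPow : ℕ → H → H
  | 0, _ => 1
  | i + 1, a => nharm a (nharmPow i a)

/-- `i`-fold n-shuffle power: `a^{ш̄ 0} = 1`, `a^{ш̄ (i+1)} = a ш̄ a^{ш̄ i}`. -/
noncomputable def nshPow : ℕ → H → H
  | 0, _ => 1
  | i + 1, a => nsh a (nshPow i a)

end H


namespace H

set_option linter.unusedSimpArgs false
set_option linter.unnecessarySeqFocus false

/-! ### Linear and bilinear extensions -/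

theorem sum_single_one {M : Type*} [AddCommMonoid M] (w : FreeMonoid Letter)
    (f : FreeMonoid Letter → ℚ → M) (h : f w 0 = 0) :
    Finsupp.sum (word w).coeff f = f w 1 := by
  unfold word
  rw [MonoidAlgebra.coeff_single, Finsupp.sum_single_index h]

/-- Linear extension of a function on words. -/
noncomputable def linL (f : FreeMonoid Letter → H) : H →ₗ[ℚ] H where
  toFun a := Finsupp.sum a.coeff fun w c => c • f w
  map_add' a b := by
    rw [MonoidAlgebra.coeff_add]
    exact Finsupp.sum_add_index' (by simp) (by simp [add_smul])
  map_smul' r a := by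
    rw [MonoidAlgebra.coeff_smul, Finsupp.sum_smul_index (by simp)]
    simp [Finsupp.smul_sum, mul_smul]

/-- Bilinear extension of a function on pairs of words. -/
noncomputable def bilL (f : FreeMonoid Letter → FreeMonoid Letter → H) :
    H →ₗ[ℚ] H →ₗ[ℚ] H :=
  LinearMap.mk₂ ℚ (fun a b => Finsupp.sum a.coeff fun w1 c1 =>
    Finsupp.sum b.coeff fun w2 c2 => (c1 * c2) • f w1 w2)
    (by
      intro a b c
      rw [MonoidAlgebra.coeff_add]
      exact Finsupp.sum_add_index' (by simp) (by simp [add_mul, add_smul, Finsupp.sum_add]))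
    (by
      intro r a b
      rw [MonoidAlgebra.coeff_smul, Finsupp.sum_smul_index (by simp)]
      simp [Finsupp.smul_sum, mul_smul])
    (by
      intro a b c
      rw [MonoidAlgebra.coeff_add, ← Finsupp.sum_add]
      refine Finset.sum_congr rfl fun w _ => ?_
      exact Finsupp.sum_add_index' (by simp) (by simp [mul_add, add_smul]))
    (by
      intro r a b
      rw [MonoidAlgebra.coeff_smul, Finsupp.smul_sum]
      refine Finset.sum_congr rfl fun w _ => ?_
      beta_reduce
      rw [Finsupp.sum_smul_index (by simp), Finsupp.smul_sum]
      refine Finset.sum_congr rfl fun v _ => ?_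
      beta_reduce
      rw [smul_smul]; congr 1; ring)

theorem linL_word (f : FreeMonoid Letter → H) (w : FreeMonoid Letter) :
    linL f (word w) = f w := by
  change Finsupp.sum (word w).coeff (fun w c => c • f w) = _
  rw [sum_single_one _ _ (by simp), one_smul]

theorem bilL_word (f : FreeMonoid Letter → FreeMonoid Letter → H) (v w : FreeMonoid Letter) :
    bilL f (word v) (word w) = f v w := by
  change Finsupp.sum (word v).coeff (fun w1 c1 =>
    Finsupp.sum (word w).coeff fun w2 c2 => (c1 * c2) • f w1 w2) = _
  rw [sum_single_one _ _ (by simp), sum_single_one _ _ (by simp), one_mul, one_smul]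

noncomputable def StL : H →ₗ[ℚ] H := linL StW
noncomputable def harmL : H →ₗ[ℚ] H →ₗ[ℚ] H := bilL fun v w => harmW (toZ v) (toZ w)
noncomputable def nharmL : H →ₗ[ℚ] H →ₗ[ℚ] H := bilL fun v w => nharmW (toZ v) (toZ w)
noncomputable def shL : H →ₗ[ℚ] H →ₗ[ℚ] H :=
  bilL fun v w => shW (FreeMonoid.toList v) (FreeMonoid.toList w)
noncomputable def nshL : H →ₗ[ℚ] H →ₗ[ℚ] H :=
  bilL fun v w => nshW (FreeMonoid.toList v) (FreeMonoid.toList w)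

theorem StL_eq (a : H) : StL a = St a := rfl
theorem harmL_eq (a b : H) : harmL a b = harm a b := rfl
theorem nharmL_eq (a b : H) : nharmL a b = nharm a b := rfl
theorem shL_eq (a b : H) : shL a b = sh a b := rfl
theorem nshL_eq (a b : H) : nshL a b = nsh a b := rfl

/-- Two bilinear maps agreeing on generators agree on spans. -/
theorem bil_ext {s t : Set H} (f g : H →ₗ[ℚ] H →ₗ[ℚ] H)
    (h : ∀ a ∈ s, ∀ b ∈ t, f a b = g a b) {a b : H}
    (ha : a ∈ Submodule.span ℚ s) (hb : b ∈ Submodule.span ℚ t) : f a b = g a b := by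
  have h1 : ∀ a ∈ s, f a b = g a b := fun a ha =>
    LinearMap.eqOn_span (f := f a) (g := g a) (fun b hb => h a ha b hb) hb
  exact LinearMap.eqOn_span (f := f.flip b) (g := g.flip b) (fun a ha => h1 a ha) ha

/-- Two linear maps agreeing on generators agree on the span. -/
theorem lin_ext {s : Set H} {f g : H →ₗ[ℚ] H} (h : ∀ a ∈ s, f a = g a) {a : H}
    (ha : a ∈ Submodule.span ℚ s) : f a = g a :=
  LinearMap.eqOn_span (f := f) (g := g) h ha

/-! ### Words -/

noncomputable def wl (l : List Letter) : H := word (FreeMonoid.ofList l)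

theorem word_mul (v w : FreeMonoid Letter) : word (v * w) = word v * word w := by
  simp [word, MonoidAlgebra.single_mul_single]

theorem wl_nil : wl [] = 1 := rfl

theorem wl_append (l m : List Letter) : wl (l ++ m) = wl l * wl m := by
  unfold wl; rw [FreeMonoid.ofList_append, word_mul]

theorem wl_cons (u : Letter) (l : List Letter) : wl (u :: l) = word (FreeMonoid.of u) * wl l := by
  unfold wl; rw [FreeMonoid.ofList_cons, word_mul]

theorem wl_y : wl [Letter.y] = Y := rfl

theorem wl_replicate (n : ℕ) : wl (List.replicate n Letter.x) = X ^ n := by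
  induction n with
  | zero => rfl
  | succ n ih => rw [List.replicate_succ, wl_cons, ih, pow_succ']; rfl

theorem z_succ (n : ℕ) : z (n + 1) = X ^ n * Y := by
  change wl (List.replicate n Letter.x ++ [Letter.y]) = _
  rw [wl_append, wl_replicate, wl_y]

theorem X_pow_mul_z (k n : ℕ) : X ^ k * z (n + 1) = z (k + n + 1) := by
  rw [z_succ, z_succ, pow_add, mul_assoc]

theorem zl_cons (k : ℕ) (ks : List ℕ) :
    word (zListW (k :: ks)) = z k * word (zListW ks) := by
  unfold z
  rw [← word_mul]; rfl

/-- The subspace `Hy`. -/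
noncomputable def N : Submodule ℚ H := LinearMap.range (LinearMap.mulRight ℚ Y)

theorem mul_mem_N (a : H) {b : H} (hb : b ∈ N) : a * b ∈ N := by
  obtain ⟨c, rfl⟩ := hb
  exact ⟨a * c, by simp [mul_assoc]⟩

theorem Y_mem_N : Y ∈ N := ⟨1, by simp⟩

theorem z_mem_N (n : ℕ) : z (n + 1) ∈ N := by
  rw [z_succ]; exact mul_mem_N _ Y_mem_N

/-- Nonempty words ending in `y`. -/
inductive G : List Letter → Prop
  | base : G [Letter.y]
  | cons (u : Letter) {w : List Letter} : G w → G (u :: w)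

theorem G_append (l : List Letter) : G (l ++ [Letter.y]) := by
  induction l with
  | nil => exact G.base
  | cons u l ih => exact G.cons u ih

theorem G.exists {l : List Letter} (h : G l) : ∃ m, l = m ++ [Letter.y] := by
  induction h with
  | base => exact ⟨[], rfl⟩
  | cons u _ ih => obtain ⟨m, rfl⟩ := ih; exact ⟨u :: m, rfl⟩

theorem G.ne_nil {l : List Letter} (h : G l) : l ≠ [] := by cases h <;> simp

theorem G.mem {l : List Letter} (h : G l) : wl l ∈ N := by
  obtain ⟨m, rfl⟩ := h.exists
  rw [wl_append]; exact mul_mem_N _ Y_mem_N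

theorem mem_span_words (a : H) : a ∈ Submodule.span ℚ (Set.range wl) := by
  induction a using MonoidAlgebra.induction_on with
  | of m => exact Submodule.subset_span ⟨FreeMonoid.toList m, rfl⟩
  | add x y hx hy => exact Submodule.add_mem _ hx hy
  | smul r x hx => exact Submodule.smul_mem _ _ hx

theorem N_eq_span : N = Submodule.span ℚ (wl '' {l | G l}) := by
  apply le_antisymm
  · rintro _ ⟨a, rfl⟩
    have := mem_span_words a
    induction this using Submodule.span_induction with
    | mem x h =>
      obtain ⟨l, rfl⟩ := h
      exact Submodule.subset_span ⟨l ++ [Letter.y], G_append l, by simp [wl_append, wl_y]⟩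
    | zero => simp
    | add x y _ _ hx hy => rw [map_add]; exact Submodule.add_mem _ hx hy
    | smul r x _ hx => rw [map_smul]; exact Submodule.smul_mem _ _ hx
  · rw [Submodule.span_le]
    rintro _ ⟨l, hl, rfl⟩
    exact G.mem hl

/-! ### The map `St` -/

theorem StL_wl (l : List Letter) : StL (wl (l ++ [Letter.y])) = S2 (wl l) * Y := by
  unfold StL wl
  rw [linL_word]
  simp [StW]

theorem StL_mul_Y (a : H) : StL (a * Y) = S2 a * Y := by
  have h := mem_span_words a
  have main := fun hh => lin_ext (f := StL.comp (LinearMap.mulRight ℚ Y))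
    (g := (LinearMap.mulRight ℚ Y).comp S2.toLinearMap)  hh h
  simp only [LinearMap.compl₁₂_apply, LinearMap.compr₂_apply, LinearMap.add_apply,
    LinearMap.sub_apply, LinearMap.mulLeft_apply, LinearMap.id_coe, id_eq, LinearMap.comp_apply,
    LinearMap.flip_apply, LinearMap.coe_comp, Function.comp_apply] at main
  refine main ?_
  rintro _ ⟨l, rfl⟩
  have := StL_wl l
  rw [wl_append, wl_y] at this
  simpa using this

theorem StL_mul (a : H) {b : H} (hb : b ∈ N) : StL (a * b) = S2 a * StL b := by
  obtain ⟨c, rfl⟩ := hb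
  simp only [LinearMap.mulRight_apply]
  rw [← mul_assoc, StL_mul_Y, StL_mul_Y, map_mul, mul_assoc]

theorem StL_mem {b : H} (hb : b ∈ N) : StL b ∈ N := by
  obtain ⟨c, rfl⟩ := hb
  simp only [LinearMap.mulRight_apply]
  rw [StL_mul_Y]; exact mul_mem_N _ Y_mem_N

theorem S2_X : S2 X = X := by
  unfold S2 X word
  rw [MonoidAlgebra.lift_single]; simp [X, word]

theorem S2_Y : S2 Y = Y - X := by
  unfold S2 Y word
  rw [MonoidAlgebra.lift_single]; simp [Y, word]

theorem StL_Y : StL Y = Y := by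
  have := StL_mul_Y 1
  simpa using this

theorem StL_one : StL 1 = 1 := by
  rw [← wl_nil]
  unfold StL wl
  rw [linL_word]
  rfl

theorem S2_z (n : ℕ) : S2 (z (n + 1)) = z (n + 1) - X ^ (n + 1) := by
  rw [z_succ, map_mul, map_pow, S2_X, S2_Y, mul_sub, pow_succ]

theorem StL_z (n : ℕ) : StL (z (n + 1)) = z (n + 1) := by
  rw [z_succ, StL_mul_Y, map_pow, S2_X]

/-! ### Shuffle product -/

theorem shL_wl (l m : List Letter) : shL (wl l) (wl m) = shW l m := by
  unfold shL wl; rw [bilL_word]; rfl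

theorem nshL_wl (l m : List Letter) : nshL (wl l) (wl m) = nshW l m := by
  unfold nshL wl; rw [bilL_word]; rfl

theorem δ_G {l : List Letter} (h : G l) : δ l = 0 := by cases h <;> rfl

theorem nsh_rec (u v : Letter) {P Q : H} (hP : P ∈ N) (hQ : Q ∈ N) :
    nshL (word (FreeMonoid.of u) * P) (word (FreeMonoid.of v) * Q) =
      word (FreeMonoid.of u) * nshL P (word (FreeMonoid.of v) * Q) +
      word (FreeMonoid.of v) * nshL (word (FreeMonoid.of u) * P) Q := by
  rw [N_eq_span] at hP hQ
  have main := fun hh => bil_ext (nshL.compl₁₂ (LinearMap.mulLeft ℚ (word (FreeMonoid.of u)))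
      (LinearMap.mulLeft ℚ (word (FreeMonoid.of v))))
    ((nshL.compl₁₂ LinearMap.id (LinearMap.mulLeft ℚ (word (FreeMonoid.of v)))).compr₂
      (LinearMap.mulLeft ℚ (word (FreeMonoid.of u))) +
     (nshL.compl₁₂ (LinearMap.mulLeft ℚ (word (FreeMonoid.of u))) LinearMap.id).compr₂
      (LinearMap.mulLeft ℚ (word (FreeMonoid.of v))))  hh hP hQ
  simp only [LinearMap.compl₁₂_apply, LinearMap.compr₂_apply, LinearMap.add_apply,
    LinearMap.sub_apply, LinearMap.mulLeft_apply, LinearMap.id_coe, id_eq, LinearMap.comp_apply,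
    LinearMap.flip_apply, LinearMap.coe_comp, Function.comp_apply] at main
  refine main ?_
  rintro _ ⟨l, hl, rfl⟩ _ ⟨m, hm, rfl⟩
  simp only [← wl_cons, nshL_wl]
  rw [nshW, δ_G hl, δ_G hm]
  simp

theorem nsh_Y_left (v : Letter) {Q : H} (hQ : Q ∈ N) :
    nshL Y (word (FreeMonoid.of v) * Q) =
      (Y - X) * (word (FreeMonoid.of v) * Q) + word (FreeMonoid.of v) * nshL Y Q := by
  rw [N_eq_span] at hQ
  have main := fun hh => lin_ext
    (f := (nshL Y).comp (LinearMap.mulLeft ℚ (word (FreeMonoid.of v))))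
    (g := (LinearMap.mulLeft ℚ (Y - X)).comp (LinearMap.mulLeft ℚ (word (FreeMonoid.of v))) +
      (LinearMap.mulLeft ℚ (word (FreeMonoid.of v))).comp (nshL Y))  hh hQ
  simp only [LinearMap.compl₁₂_apply, LinearMap.compr₂_apply, LinearMap.add_apply,
    LinearMap.sub_apply, LinearMap.mulLeft_apply, LinearMap.id_coe, id_eq, LinearMap.comp_apply,
    LinearMap.flip_apply, LinearMap.coe_comp, Function.comp_apply] at main
  refine main ?_
  rintro _ ⟨m, hm, rfl⟩
  rw [← wl_y, ← wl_cons, nshL_wl, nshL_wl, nshW, δ_G hm, nshW, wl_y]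
  change Y * wl (v :: m) + _ - (1 : ℚ) • wl (Letter.x :: v :: m) - _ = _
  rw [wl_cons Letter.x, one_smul, zero_smul, sub_mul]
  change _ + _ - X * _ - _ = _
  abel

theorem nsh_Y_right (v : Letter) {Q : H} (hQ : Q ∈ N) :
    nshL (word (FreeMonoid.of v) * Q) Y =
      (Y - X) * (word (FreeMonoid.of v) * Q) + word (FreeMonoid.of v) * nshL Q Y := by
  rw [N_eq_span] at hQ
  have main := fun hh => lin_ext
    (f := (nshL.flip Y).comp (LinearMap.mulLeft ℚ (word (FreeMonoid.of v))))
    (g := (LinearMap.mulLeft ℚ (Y - X)).comp (LinearMap.mulLeft ℚ (word (FreeMonoid.of v))) +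
      (LinearMap.mulLeft ℚ (word (FreeMonoid.of v))).comp (nshL.flip Y))  hh hQ
  simp only [LinearMap.compl₁₂_apply, LinearMap.compr₂_apply, LinearMap.add_apply,
    LinearMap.sub_apply, LinearMap.mulLeft_apply, LinearMap.id_coe, id_eq, LinearMap.comp_apply,
    LinearMap.flip_apply, LinearMap.coe_comp, Function.comp_apply] at main
  refine main ?_
  rintro _ ⟨m, hm, rfl⟩
  obtain ⟨v', m', rfl⟩ := List.exists_cons_of_ne_nil hm.ne_nil
  rw [← wl_y, ← wl_cons, nshL_wl, nshL_wl, nshW, δ_G hm, nshW, wl_y]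
  change _ + Y * wl (v :: v' :: m') - _ - (1 : ℚ) • wl (Letter.x :: v :: v' :: m') = _
  rw [wl_cons Letter.x, one_smul, zero_smul, sub_mul]
  change _ + _ - _ - X * _ = _
  abel

/-- The image of a letter under `S2`. -/
noncomputable def s (u : Letter) : H := S2 (word (FreeMonoid.of u))

theorem s_x : s Letter.x = word (FreeMonoid.of Letter.x) := S2_X
theorem s_y : s Letter.y = word (FreeMonoid.of Letter.y) - word (FreeMonoid.of Letter.x) := S2_Y

theorem nsh_rec_s (u v : Letter) {P Q : H} (hP : P ∈ N) (hQ : Q ∈ N) :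
    nshL (s u * P) (s v * Q) = s u * nshL P (s v * Q) + s v * nshL (s u * P) Q := by
  cases u <;> cases v <;>
    simp only [s_x, s_y, sub_mul, mul_sub, map_sub, LinearMap.sub_apply, nsh_rec _ _ hP hQ] <;>
    abel

theorem nsh_Y_left_s (v : Letter) {Q : H} (hQ : Q ∈ N) :
    nshL Y (s v * Q) = (Y - X) * (s v * Q) + s v * nshL Y Q := by
  cases v <;>
    simp only [s_x, s_y, sub_mul, mul_sub, map_sub, LinearMap.sub_apply, nsh_Y_left _ hQ] <;>
    abel

theorem nsh_Y_right_s (v : Letter) {Q : H} (hQ : Q ∈ N) :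
    nshL (s v * Q) Y = (Y - X) * (s v * Q) + s v * nshL Q Y := by
  cases v <;>
    simp only [s_x, s_y, sub_mul, mul_sub, map_sub, LinearMap.sub_apply, nsh_Y_right _ hQ] <;>
    abel

theorem StL_cons (u : Letter) {l : List Letter} (h : G l) :
    StL (wl (u :: l)) = s u * StL (wl l) := by
  rw [wl_cons, StL_mul _ h.mem]; rfl

theorem shW_nil_right (l : List Letter) : shW l [] = wl l := by
  cases l <;> rw [shW] <;> rfl

theorem shW_nil_left (l : List Letter) : shW [] l = wl l := by
  rw [shW]; rfl

theorem shW_main {l m : List Letter} (hl : G l) (hm : G m) :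
    shW l m ∈ N ∧ StL (shW l m) = nshL (StL (wl l)) (StL (wl m)) := by
  induction hl generalizing m with
  | base =>
    induction hm with
    | base =>
      have e : shW [Letter.y] [Letter.y] = Y * Y + Y * Y := by
        rw [shW, shW_nil_left, shW_nil_right]; rfl
      rw [e]
      refine ⟨Submodule.add_mem _ (mul_mem_N _ Y_mem_N) (mul_mem_N _ Y_mem_N), ?_⟩
      rw [wl_y, map_add, StL_mul_Y, StL_Y, S2_Y]
      conv_rhs => rw [← wl_y, nshL_wl, nshW, nshW, nshW]
      change _ = Y * Y + Y * Y - (1 : ℚ) • wl [Letter.x, Letter.y] - (1 : ℚ) • wl [Letter.x, Letter.y]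
      rw [wl_cons, wl_y, one_smul]
      change _ = Y * Y + Y * Y - X * Y - X * Y
      rw [sub_mul]; abel
    | @cons v m hm ih =>
      have e : shW [Letter.y] (v :: m) =
          Y * wl (v :: m) + word (FreeMonoid.of v) * shW [Letter.y] m := by
        rw [shW, shW_nil_left]; rfl
      rw [e]
      have hvm := (G.cons v hm).mem
      refine ⟨Submodule.add_mem _ (mul_mem_N _ hvm) (mul_mem_N _ ih.1), ?_⟩
      rw [map_add, StL_mul _ hvm, StL_mul _ ih.1, ih.2, StL_cons v hm, wl_y, StL_Y,
        nsh_Y_left_s v (StL_mem hm.mem), S2_Y]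
      rfl
  | @cons u l hl ihl =>
    have hul := (G.cons u hl).mem
    induction hm with
    | base =>
      have e : shW (u :: l) [Letter.y] =
          word (FreeMonoid.of u) * shW l [Letter.y] + Y * wl (u :: l) := by
        rw [shW, shW_nil_right]; rfl
      rw [e]
      have ih := ihl G.base
      refine ⟨Submodule.add_mem _ (mul_mem_N _ ih.1) (mul_mem_N _ hul), ?_⟩
      rw [map_add, StL_mul _ hul, StL_mul _ ih.1, ih.2, StL_cons u hl, wl_y, StL_Y,
        nsh_Y_right_s u (StL_mem hl.mem), S2_Y, add_comm]
      rfl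
    | @cons v m hm ih =>
      have ih2 := ihl (G.cons v hm)
      rw [shW]
      refine ⟨Submodule.add_mem _ (mul_mem_N _ ih2.1) (mul_mem_N _ ih.1), ?_⟩
      rw [map_add, StL_mul _ ih2.1, StL_mul _ ih.1, ih2.2, ih.2, StL_cons u hl, StL_cons v hm,
        nsh_rec_s u v (StL_mem hl.mem) (StL_mem hm.mem)]
      rfl

/-! ### Harmonic product -/

/-- Lists of positive integers. -/
def Pos (ks : List ℕ) : Prop := ∀ k ∈ ks, 0 < k

theorem Pos_nil : Pos [] := by simp [Pos]

theorem Pos_cons (k : ℕ) {ks : List ℕ} (h : Pos ks) : Pos ((k + 1) :: ks) := by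
  intro i hi
  rcases List.mem_cons.1 hi with rfl | hi
  · omega
  · exact h i hi

theorem toZAux_replicate (j n : ℕ) (r : List Letter) :
    toZAux (List.replicate j Letter.x ++ Letter.y :: r) n = (n + j + 1) :: toZAux r 0 := by
  induction j generalizing n with
  | zero => simp [toZAux]
  | succ j ih =>
    rw [List.replicate_succ, List.cons_append, toZAux, ih]
    congr 1; omega

theorem toZ_zListW {ks : List ℕ} (h : Pos ks) : toZ (zListW ks) = ks := by
  induction ks with
  | nil => rfl
  | cons k ks ih =>
    have hk : 0 < k := h k (by simp)
    have e : FreeMonoid.toList (zListW (k :: ks)) =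
        List.replicate (k - 1) Letter.x ++ Letter.y :: FreeMonoid.toList (zListW ks) := by
      simp [zListW]
    unfold toZ at ih ⊢
    rw [e, toZAux_replicate, ih fun i hi => h i (by simp [hi])]
    congr 1; omega

noncomputable def zl (ks : List ℕ) : H := word (zListW ks)

theorem zl_nil : zl [] = 1 := rfl

theorem zl_cons' (k : ℕ) (ks : List ℕ) : zl (k :: ks) = z k * zl ks := zl_cons k ks

theorem harmL_zl {ks ls : List ℕ} (hk : Pos ks) (hl : Pos ls) :
    harmL (zl ks) (zl ls) = harmW ks ls := by
  unfold harmL zl; rw [bilL_word, toZ_zListW hk, toZ_zListW hl]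

theorem nharmL_zl {ks ls : List ℕ} (hk : Pos ks) (hl : Pos ls) :
    nharmL (zl ks) (zl ls) = nharmW ks ls := by
  unfold nharmL zl; rw [bilL_word, toZ_zListW hk, toZ_zListW hl]

/-- Span of all words in the `z_k`. -/
noncomputable def M : Submodule ℚ H := Submodule.span ℚ (zl '' {ks | Pos ks})

theorem zl_mem_M {ks : List ℕ} (h : Pos ks) : zl ks ∈ M := Submodule.subset_span ⟨ks, h, rfl⟩

theorem one_mem_M : (1 : H) ∈ M := zl_mem_M Pos_nil

theorem z_mul_mem_M (n : ℕ) {a : H} (h : a ∈ M) : z (n + 1) * a ∈ M := by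
  unfold M at h
  induction h using Submodule.span_induction with
  | mem x h =>
    obtain ⟨ks, hk, rfl⟩ := h
    rw [← zl_cons']; exact zl_mem_M (Pos_cons n hk)
  | zero => simp
  | add x y _ _ hx hy => rw [mul_add]; exact Submodule.add_mem _ hx hy
  | smul r x _ hx => rw [mul_smul_comm]; exact Submodule.smul_mem _ _ hx

theorem nh_one_left {a : H} (h : a ∈ M) : nharmL 1 a = a := by
  have main := fun hh => lin_ext (f := nharmL 1) (g := LinearMap.id)  hh h
  simp only [LinearMap.compl₁₂_apply, LinearMap.compr₂_apply, LinearMap.add_apply,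
    LinearMap.sub_apply, LinearMap.mulLeft_apply, LinearMap.id_coe, id_eq, LinearMap.comp_apply,
    LinearMap.flip_apply, LinearMap.coe_comp, Function.comp_apply] at main
  refine main ?_
  rintro _ ⟨ks, hk, rfl⟩
  rw [← zl_nil, nharmL_zl Pos_nil hk, nharmW]; rfl

theorem nh_one_right {a : H} (h : a ∈ M) : nharmL a 1 = a := by
  have main := fun hh => lin_ext (f := nharmL.flip 1) (g := LinearMap.id)  hh h
  simp only [LinearMap.compl₁₂_apply, LinearMap.compr₂_apply, LinearMap.add_apply,
    LinearMap.sub_apply, LinearMap.mulLeft_apply, LinearMap.id_coe, id_eq, LinearMap.comp_apply,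
    LinearMap.flip_apply, LinearMap.coe_comp, Function.comp_apply] at main
  refine main ?_
  rintro _ ⟨ks, hk, rfl⟩
  rw [← zl_nil, nharmL_zl hk Pos_nil]
  cases ks <;> rw [nharmW] <;> rfl

theorem nh_rec (k l : ℕ) {P Q : H} (hP : P ∈ M) (hQ : Q ∈ M) :
    nharmL (z (k + 1) * P) (z (l + 1) * Q) =
      z (k + 1) * nharmL P (z (l + 1) * Q) + z (l + 1) * nharmL (z (k + 1) * P) Q
        - z (k + l + 1 + 1) * nharmL P Q := by
  have main := fun hh => bil_ext (nharmL.compl₁₂ (LinearMap.mulLeft ℚ (z (k + 1)))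
      (LinearMap.mulLeft ℚ (z (l + 1))))
    ((nharmL.compl₁₂ LinearMap.id (LinearMap.mulLeft ℚ (z (l + 1)))).compr₂
      (LinearMap.mulLeft ℚ (z (k + 1))) +
     (nharmL.compl₁₂ (LinearMap.mulLeft ℚ (z (k + 1))) LinearMap.id).compr₂
      (LinearMap.mulLeft ℚ (z (l + 1))) -
     nharmL.compr₂ (LinearMap.mulLeft ℚ (z (k + l + 1 + 1))))  hh hP hQ
  simp only [LinearMap.compl₁₂_apply, LinearMap.compr₂_apply, LinearMap.add_apply,
    LinearMap.sub_apply, LinearMap.mulLeft_apply, LinearMap.id_coe, id_eq, LinearMap.comp_apply,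
    LinearMap.flip_apply, LinearMap.coe_comp, Function.comp_apply] at main
  refine main ?_
  rintro _ ⟨p, hp, rfl⟩ _ ⟨q, hq, rfl⟩
  simp only [← zl_cons']
  rw [nharmL_zl (Pos_cons k hp) (Pos_cons l hq), nharmL_zl hp (Pos_cons l hq),
    nharmL_zl (Pos_cons k hp) hq, nharmL_zl hp hq, nharmW,
    show k + 1 + (l + 1) = k + l + 1 + 1 by omega]

/-- Generators of `Hy` with respect to `z`-words. -/
def gen : Set H := {a | ∃ n, ∃ p ∈ M, a = z (n + 1) * p}

theorem G.exists_z {l : List Letter} (h : G l) :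
    ∃ n ks, Pos ks ∧ wl l = zl ((n + 1) :: ks) := by
  induction h with
  | base => exact ⟨0, [], Pos_nil, rfl⟩
  | cons u _ ih =>
    obtain ⟨n, ks, hk, e⟩ := ih
    rw [wl_cons, e]
    cases u with
    | x =>
      refine ⟨n + 1, ks, hk, ?_⟩
      have := X_pow_mul_z 1 n
      rw [pow_one, show 1 + n + 1 = n + 1 + 1 by omega] at this
      rw [zl_cons', zl_cons', ← this, mul_assoc]; rfl
    | y =>
      refine ⟨0, (n + 1) :: ks, Pos_cons n hk, ?_⟩
      rw [zl_cons' (0 + 1), z_succ, pow_zero, one_mul]; rfl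

theorem N_le_gen : N ≤ Submodule.span ℚ gen := by
  rw [N_eq_span]
  refine Submodule.span_mono ?_
  rintro _ ⟨l, hl, rfl⟩
  obtain ⟨n, ks, hk, e⟩ := hl.exists_z
  exact ⟨n, zl ks, zl_mem_M hk, by rw [e, zl_cons']⟩

theorem N_le_M : N ≤ M := by
  refine N_le_gen.trans (Submodule.span_le.2 ?_)
  rintro _ ⟨n, p, hp, rfl⟩
  exact z_mul_mem_M n hp

theorem X_pow_mul_z_mul (k n : ℕ) (a : H) : X ^ k * (z (n + 1) * a) = z (k + n + 1) * a := by
  rw [← mul_assoc, X_pow_mul_z]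

theorem key (k l : ℕ) {P Q : H} (hP : P ∈ N) (hQ : Q ∈ N) :
    nharmL ((z (k + 1) - X ^ (k + 1)) * P) ((z (l + 1) - X ^ (l + 1)) * Q) =
      (z (k + 1) - X ^ (k + 1)) * nharmL P ((z (l + 1) - X ^ (l + 1)) * Q) +
      (z (l + 1) - X ^ (l + 1)) * nharmL ((z (k + 1) - X ^ (k + 1)) * P) Q +
      (z (k + l + 1 + 1) - X ^ (k + l + 1 + 1)) * nharmL P Q := by
  have main := fun hh => bil_ext (nharmL.compl₁₂ (LinearMap.mulLeft ℚ (z (k + 1) - X ^ (k + 1)))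
      (LinearMap.mulLeft ℚ (z (l + 1) - X ^ (l + 1))))
    ((nharmL.compl₁₂ LinearMap.id (LinearMap.mulLeft ℚ (z (l + 1) - X ^ (l + 1)))).compr₂
      (LinearMap.mulLeft ℚ (z (k + 1) - X ^ (k + 1))) +
     (nharmL.compl₁₂ (LinearMap.mulLeft ℚ (z (k + 1) - X ^ (k + 1))) LinearMap.id).compr₂
      (LinearMap.mulLeft ℚ (z (l + 1) - X ^ (l + 1))) +
     nharmL.compr₂ (LinearMap.mulLeft ℚ (z (k + l + 1 + 1) - X ^ (k + l + 1 + 1))))  hh (N_le_gen hP) (N_le_gen hQ)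
  simp only [LinearMap.compl₁₂_apply, LinearMap.compr₂_apply, LinearMap.add_apply,
    LinearMap.sub_apply, LinearMap.mulLeft_apply, LinearMap.id_coe, id_eq, LinearMap.comp_apply,
    LinearMap.flip_apply, LinearMap.coe_comp, Function.comp_apply] at main
  refine main ?_
  rintro _ ⟨i, p, hp, rfl⟩ _ ⟨j, q, hq, rfl⟩
  have hip := fun i => z_mul_mem_M i hp
  have hjq := fun i => z_mul_mem_M i hq
  simp only [sub_mul, X_pow_mul_z_mul, map_sub, LinearMap.sub_apply, nh_rec _ _ hp hq,
    nh_rec _ _ (hip _) hq, nh_rec _ _ hp (hjq _), nh_rec _ _ (hip _) (hjq _), mul_add, mul_sub]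
  ring_nf
  abel

theorem key_left (k l : ℕ) {Q : H} (hQ : Q ∈ N) :
    nharmL (z (k + 1)) ((z (l + 1) - X ^ (l + 1)) * Q) =
      (z (k + 1) - X ^ (k + 1)) * ((z (l + 1) - X ^ (l + 1)) * Q) +
      (z (l + 1) - X ^ (l + 1)) * nharmL (z (k + 1)) Q +
      (z (k + l + 1 + 1) - X ^ (k + l + 1 + 1)) * Q := by
  have main := fun hh => lin_ext
    (f := (nharmL (z (k + 1))).comp (LinearMap.mulLeft ℚ (z (l + 1) - X ^ (l + 1))))
    (g := (LinearMap.mulLeft ℚ (z (k + 1) - X ^ (k + 1))).comp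
        (LinearMap.mulLeft ℚ (z (l + 1) - X ^ (l + 1))) +
      (LinearMap.mulLeft ℚ (z (l + 1) - X ^ (l + 1))).comp (nharmL (z (k + 1))) +
      LinearMap.mulLeft ℚ (z (k + l + 1 + 1) - X ^ (k + l + 1 + 1)))  hh (N_le_gen hQ)
  simp only [LinearMap.compl₁₂_apply, LinearMap.compr₂_apply, LinearMap.add_apply,
    LinearMap.sub_apply, LinearMap.mulLeft_apply, LinearMap.id_coe, id_eq, LinearMap.comp_apply,
    LinearMap.flip_apply, LinearMap.coe_comp, Function.comp_apply] at main
  refine main ?_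
  rintro _ ⟨j, q, hq, rfl⟩
  have hjq := fun i => z_mul_mem_M i hq
  have hjjq := fun i j => z_mul_mem_M i (hjq j)
  have r1 : ∀ (a b : ℕ) {Q : H}, Q ∈ M → nharmL (z (a + 1)) (z (b + 1) * Q) =
      z (a + 1) * (z (b + 1) * Q) + z (b + 1) * nharmL (z (a + 1)) Q
        - z (a + b + 1 + 1) * Q := by
    intro a b Q hQ
    have := nh_rec a b one_mem_M hQ
    rwa [mul_one, nh_one_left (z_mul_mem_M b hQ), nh_one_left hQ] at this
  simp only [sub_mul, X_pow_mul_z_mul, map_sub, LinearMap.sub_apply, r1 _ _ hq,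
    r1 _ _ (hjq _), mul_add, mul_sub]
  ring_nf
  abel

theorem key_right (k l : ℕ) {Q : H} (hQ : Q ∈ N) :
    nharmL ((z (l + 1) - X ^ (l + 1)) * Q) (z (k + 1)) =
      (z (k + 1) - X ^ (k + 1)) * ((z (l + 1) - X ^ (l + 1)) * Q) +
      (z (l + 1) - X ^ (l + 1)) * nharmL Q (z (k + 1)) +
      (z (k + l + 1 + 1) - X ^ (k + l + 1 + 1)) * Q := by
  have main := fun hh => lin_ext
    (f := (nharmL.flip (z (k + 1))).comp (LinearMap.mulLeft ℚ (z (l + 1) - X ^ (l + 1))))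
    (g := (LinearMap.mulLeft ℚ (z (k + 1) - X ^ (k + 1))).comp
        (LinearMap.mulLeft ℚ (z (l + 1) - X ^ (l + 1))) +
      (LinearMap.mulLeft ℚ (z (l + 1) - X ^ (l + 1))).comp (nharmL.flip (z (k + 1))) +
      LinearMap.mulLeft ℚ (z (k + l + 1 + 1) - X ^ (k + l + 1 + 1)))  hh (N_le_gen hQ)
  simp only [LinearMap.compl₁₂_apply, LinearMap.compr₂_apply, LinearMap.add_apply,
    LinearMap.sub_apply, LinearMap.mulLeft_apply, LinearMap.id_coe, id_eq, LinearMap.comp_apply,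
    LinearMap.flip_apply, LinearMap.coe_comp, Function.comp_apply] at main
  refine main ?_
  rintro _ ⟨j, q, hq, rfl⟩
  have hjq := fun i => z_mul_mem_M i hq
  have r1 : ∀ (a b : ℕ) {Q : H}, Q ∈ M → nharmL (z (b + 1) * Q) (z (a + 1)) =
      z (a + 1) * (z (b + 1) * Q) + z (b + 1) * nharmL Q (z (a + 1))
        - z (a + b + 1 + 1) * Q := by
    intro a b Q hQ
    have := nh_rec b a hQ one_mem_M
    rw [mul_one, nh_one_right (z_mul_mem_M b hQ), nh_one_right hQ] at this
    rw [this, add_comm b a]; abel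
  simp only [sub_mul, X_pow_mul_z_mul, map_sub, LinearMap.sub_apply, r1 _ _ hq,
    r1 _ _ (hjq _), mul_add, mul_sub]
  ring_nf
  abel

/-- Nonempty lists of positive integers. -/
inductive GZ : List ℕ → Prop
  | base (n : ℕ) : GZ [n + 1]
  | cons (n : ℕ) {ks : List ℕ} : GZ ks → GZ ((n + 1) :: ks)

theorem GZ.pos {ks : List ℕ} (h : GZ ks) : Pos ks := by
  induction h with
  | base n => exact Pos_cons n Pos_nil
  | cons n _ ih => exact Pos_cons n ih

theorem GZ_of_pos (n : ℕ) {ks : List ℕ} (h : Pos ks) : GZ ((n + 1) :: ks) := by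
  induction ks generalizing n with
  | nil => exact GZ.base n
  | cons k ks ih =>
    obtain ⟨j, rfl⟩ : ∃ j, k = j + 1 := ⟨k - 1, by have := h k (by simp); omega⟩
    exact GZ.cons n (ih j fun i hi => h i (by simp [hi]))

theorem zl_single (n : ℕ) : zl [n] = z n := by rw [zl_cons', zl_nil, mul_one]

theorem GZ.mem {ks : List ℕ} (h : GZ ks) : zl ks ∈ N := by
  induction h with
  | base n => rw [zl_single]; exact z_mem_N n
  | cons n _ ih => rw [zl_cons']; exact mul_mem_N _ ih

theorem StL_zl_cons (n : ℕ) {ks : List ℕ} (h : GZ ks) :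
    StL (zl ((n + 1) :: ks)) = (z (n + 1) - X ^ (n + 1)) * StL (zl ks) := by
  rw [zl_cons', StL_mul _ h.mem, S2_z]

theorem harmW_nil_left (ks : List ℕ) : harmW [] ks = zl ks := by rw [harmW]; rfl

theorem harmW_nil_right (ks : List ℕ) : harmW ks [] = zl ks := by cases ks <;> rw [harmW] <;> rfl

theorem harmW_main {ks ls : List ℕ} (hk : GZ ks) (hl : GZ ls) :
    harmW ks ls ∈ N ∧ StL (harmW ks ls) = nharmL (StL (zl ks)) (StL (zl ls)) := by
  induction hk generalizing ls with
  | base k =>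
    induction hl with
    | base l =>
      have e : harmW [k + 1] [l + 1] = z (k + 1) * z (l + 1) + z (l + 1) * z (k + 1)
          + z (k + l + 1 + 1) := by
        rw [harmW, harmW_nil_left, harmW_nil_left, harmW_nil_right, zl_single, zl_single, zl_nil,
          mul_one, show k + 1 + (l + 1) = k + l + 1 + 1 by omega]
      rw [e]
      refine ⟨Submodule.add_mem _ (Submodule.add_mem _ (mul_mem_N _ (z_mem_N _))
        (mul_mem_N _ (z_mem_N _))) (z_mem_N _), ?_⟩
      have h := nh_rec k l one_mem_M one_mem_M
      simp only [mul_one] at h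
      rw [nh_one_left one_mem_M, nh_one_left (N_le_M (z_mem_N _)),
        nh_one_right (N_le_M (z_mem_N _))] at h
      rw [map_add, map_add, StL_mul _ (z_mem_N _), StL_mul _ (z_mem_N _), zl_single, zl_single,
        StL_z, StL_z, StL_z, h, S2_z, S2_z, sub_mul, sub_mul, X_pow_mul_z, X_pow_mul_z, mul_one]
      ring_nf
      abel
    | @cons l ls hl ih =>
      have e : harmW [k + 1] ((l + 1) :: ls) = z (k + 1) * zl ((l + 1) :: ls)
          + z (l + 1) * harmW [k + 1] ls + z (k + l + 1 + 1) * zl ls := by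
        rw [harmW, harmW_nil_left, harmW_nil_left, show k + 1 + (l + 1) = k + l + 1 + 1 by omega]
      rw [e]
      have hll := (GZ.cons l hl).mem
      refine ⟨Submodule.add_mem _ (Submodule.add_mem _ (mul_mem_N _ hll)
        (mul_mem_N _ ih.1)) (mul_mem_N _ hl.mem), ?_⟩
      rw [map_add, map_add, StL_mul _ hll, StL_mul _ ih.1, StL_mul _ hl.mem, ih.2,
        StL_zl_cons l hl, zl_single, StL_z, key_left k l (StL_mem hl.mem), S2_z, S2_z, S2_z]
  | @cons k ks hk ihk =>
    have hkk := (GZ.cons k hk).mem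
    induction hl with
    | base l =>
      have e : harmW ((k + 1) :: ks) [l + 1] = z (k + 1) * harmW ks [l + 1]
          + z (l + 1) * zl ((k + 1) :: ks) + z (l + k + 1 + 1) * zl ks := by
        rw [harmW, harmW_nil_right, harmW_nil_right,
          show k + 1 + (l + 1) = l + k + 1 + 1 by omega]
      rw [e]
      have ih := ihk (GZ.base l)
      refine ⟨Submodule.add_mem _ (Submodule.add_mem _ (mul_mem_N _ ih.1) (mul_mem_N _ hkk))
        (mul_mem_N _ hk.mem), ?_⟩
      rw [map_add, map_add, StL_mul _ hkk, StL_mul _ ih.1, StL_mul _ hk.mem, ih.2,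
        StL_zl_cons k hk, zl_single, StL_z, key_right l k (StL_mem hk.mem), S2_z, S2_z, S2_z]
      abel
    | @cons l ls hl ih =>
      have ih2 := ihk (GZ.cons l hl)
      have ih3 := ihk hl
      rw [harmW, show k + 1 + (l + 1) = k + l + 1 + 1 by omega]
      refine ⟨Submodule.add_mem _ (Submodule.add_mem _ (mul_mem_N _ ih2.1) (mul_mem_N _ ih.1))
        (mul_mem_N _ ih3.1), ?_⟩
      rw [map_add, map_add, StL_mul _ ih2.1, StL_mul _ ih.1, StL_mul _ ih3.1, ih2.2, ih.2, ih3.2,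
        StL_zl_cons k hk, StL_zl_cons l hl, key k l (StL_mem hk.mem) (StL_mem hl.mem),
        S2_z, S2_z, S2_z]

/-! ### Assembly -/

theorem H1_le : H1 ≤ Submodule.span ℚ (wl '' {l | l = [] ∨ G l}) := by
  unfold H1
  refine sup_le ?_ ?_
  · change N ≤ _
    rw [N_eq_span]
    exact Submodule.span_mono (Set.image_mono fun l hl => Or.inr hl)
  · refine Submodule.span_mono ?_
    rintro _ rfl
    exact ⟨[], Or.inl rfl, rfl⟩

theorem sh_final {l m : List Letter} (hl : l = [] ∨ G l) (hm : m = [] ∨ G m) :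
    StL (shL (wl l) (wl m)) = nshL (StL (wl l)) (StL (wl m)) := by
  have one_left : ∀ a, nshL 1 a = a := fun a => by
    have main := fun hh => lin_ext (f := nshL 1) (g := LinearMap.id)  hh (mem_span_words a)
    simp only [LinearMap.compl₁₂_apply, LinearMap.compr₂_apply, LinearMap.add_apply,
      LinearMap.sub_apply, LinearMap.mulLeft_apply, LinearMap.id_coe, id_eq, LinearMap.comp_apply,
      LinearMap.flip_apply, LinearMap.coe_comp, Function.comp_apply] at main
    refine main ?_
    rintro _ ⟨l, rfl⟩
    rw [← wl_nil, nshL_wl, nshW]; rfl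
  have one_right : ∀ a, nshL a 1 = a := fun a => by
    have main := fun hh => lin_ext (f := nshL.flip 1) (g := LinearMap.id)  hh (mem_span_words a)
    simp only [LinearMap.compl₁₂_apply, LinearMap.compr₂_apply, LinearMap.add_apply,
      LinearMap.sub_apply, LinearMap.mulLeft_apply, LinearMap.id_coe, id_eq, LinearMap.comp_apply,
      LinearMap.flip_apply, LinearMap.coe_comp, Function.comp_apply] at main
    refine main ?_
    rintro _ ⟨l, rfl⟩
    rw [← wl_nil, nshL_wl]
    cases l <;> rw [nshW] <;> rfl
  rw [shL_wl]
  rcases hl with rfl | hl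
  · rw [shW_nil_left, wl_nil, StL_one, one_left]
  · rcases hm with rfl | hm
    · rw [shW_nil_right, wl_nil, StL_one, one_right]
    · exact (shW_main hl hm).2

theorem harm_final {l m : List Letter} (hl : l = [] ∨ G l) (hm : m = [] ∨ G m) :
    StL (harmL (wl l) (wl m)) = nharmL (StL (wl l)) (StL (wl m)) := by
  have h : ∀ {l : List Letter}, l = [] ∨ G l → ∃ ks, (ks = [] ∨ GZ ks) ∧ wl l = zl ks := by
    rintro l (rfl | hl)
    · exact ⟨[], Or.inl rfl, rfl⟩
    · obtain ⟨n, ks, hk, e⟩ := hl.exists_z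
      exact ⟨_, Or.inr (GZ_of_pos n hk), e⟩
  have hM : ∀ {ks : List ℕ}, ks = [] ∨ GZ ks → StL (zl ks) ∈ M := by
    rintro ks (rfl | hk)
    · rw [zl_nil, StL_one]; exact one_mem_M
    · exact N_le_M (StL_mem hk.mem)
  have hpos : ∀ {ks : List ℕ}, ks = [] ∨ GZ ks → Pos ks := by
    rintro ks (rfl | hk)
    · exact Pos_nil
    · exact hk.pos
  obtain ⟨ks, hk, e1⟩ := h hl
  obtain ⟨ls, hl', e2⟩ := h hm
  rw [e1, e2, harmL_zl (hpos hk) (hpos hl')]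
  have m1 := hM hk
  have m2 := hM hl'
  rcases hk with rfl | hk
  · rw [harmW_nil_left, zl_nil, StL_one, nh_one_left m2]
  · rcases hl' with rfl | hl'
    · rw [harmW_nil_right, zl_nil, StL_one, nh_one_right m1]
    · exact (harmW_main hk hl').2

end H

open H

/-- For all `w₁, w₂ ∈ H¹`: `S̃(w₁ * w₂) = S̃(w₁) *̄ S̃(w₂)` and
`S̃(w₁ ш w₂) = S̃(w₁) ш̄ S̃(w₂)`. -/
theorem St_harm_sh :
    ∀ w1 ∈ H1, ∀ w2 ∈ H1,
      St (harm w1 w2) = nharm (St w1) (St w2) ∧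
      St (sh w1 w2) = nsh (St w1) (St w2) := by
  intro w1 h1 w2 h2
  simp only [← StL_eq, ← harmL_eq, ← nharmL_eq, ← shL_eq, ← nshL_eq]
  constructor
  · have main := fun h => bil_ext (harmL.compr₂ StL) (nharmL.compl₁₂ StL StL) h
      (H1_le h1) (H1_le h2)
    simp only [LinearMap.compl₁₂_apply, LinearMap.compr₂_apply] at main
    refine main ?_
    rintro _ ⟨l, hl, rfl⟩ _ ⟨m, hm, rfl⟩
    exact harm_final hl hm
  · have main := fun h => bil_ext (shL.compr₂ StL) (nshL.compl₁₂ StL StL) h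
      (H1_le h1) (H1_le h2)
    simp only [LinearMap.compl₁₂_apply, LinearMap.compr₂_apply] at main
    refine main ?_
    rintro _ ⟨l, hl, rfl⟩ _ ⟨m, hm, rfl⟩
    exact sh_final hl hm
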